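/- For every base b ≥ 2 and x ∈ [0,1), dim_FS(seq_b(x)) ≤ dim_FS^b(x), i.e., the finite-state dimension of the base-b expansion of x is at most the base-b finite-state dimension of x defined via information content at precisions. -/

import Mathlib

open Filter Set
open scoped ENNReal

/-- A finite-state transducer over alphabet `A`, with states `Fin n`. -/
structure FST (A : Type) where
  n : ℕ
  tr : Fin n → A → Fin n
  out1 : Fin n → A → List A
  q0 : Fin n

/-- Extension of the transition function to strings. -/
def FST.deltaS {A : Type} (T : FST A) : Fin T.n → List A → Fin T.n
  | q, [] => q
  | q, a :: w => T.deltaS (T.tr q a) w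

/-- Extension of the output function to strings. -/
def FST.nuS {A : Type} (T : FST A) : Fin T.n → List A → List A
  | _, [] => []
  | q, a :: w => T.out1 q a ++ T.nuS (T.tr q a) w

/-- The output of `T` on input `w`. -/
def FST.out {A : Type} (T : FST A) (w : List A) : List A := T.nuS T.q0 w

/-- `T`-information content of a string: shortest input producing it (`⊤` if none). -/
noncomputable def Kfst {A : Type} (T : FST A) (w : List A) : ℕ∞ :=
  sInf {k : ℕ∞ | ∃ π : List A, T.out π = w ∧ (π.length : ℕ∞) = k}

/-- The real number in `[0,1)` with finite base-`b` expansion `w`. -/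
noncomputable def realb (b : ℕ) (w : List (Fin b)) : ℝ :=
  ∑ i : Fin w.length, (w.get i : ℝ) / (b : ℝ) ^ (i.1 + 1)

/-- The real number with base-`b` expansion `S`. -/
noncomputable def realSeq (b : ℕ) (S : ℕ → Fin b) : ℝ :=
  ∑' i : ℕ, (S i : ℝ) / (b : ℝ) ^ (i + 1)

/-- The length-`n` prefix of a sequence, as a string. -/
def pre {A : Type} (S : ℕ → A) (n : ℕ) : List A := List.ofFn (fun i : Fin n => S i.1)

/-- Base-`b` `T`-information content of `x` at precision `δ`. -/
noncomputable def Kprec (b : ℕ) (T : FST (Fin b)) (δ : ℝ) (x : ℝ) : ℕ∞ :=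
  sInf {k : ℕ∞ | ∃ w : List (Fin b), |realb b w - x| < δ ∧ Kfst T w = k}

/-- Base-`b` finite-state dimension of a point of `[0,1)`. -/
noncomputable def dimFSb (b : ℕ) (x : ℝ) : ℝ≥0∞ :=
  ⨅ T : FST (Fin b),
    Filter.liminf (fun δ : ℝ =>
      (Kprec b T δ x : ℝ≥0∞) / ENNReal.ofReal (Real.logb b (1/δ)))
      (nhdsWithin 0 (Set.Ioi 0))

/-- Base-`b` finite-state dimension of a subset of `[0,1)`. -/
noncomputable def dimFSbSet (b : ℕ) (A : Set ℝ) : ℝ≥0∞ :=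
  ⨅ T : FST (Fin b), ⨆ x ∈ A,
    Filter.liminf (fun δ : ℝ =>
      (Kprec b T δ x : ℝ≥0∞) / ENNReal.ofReal (Real.logb b (1/δ)))
      (nhdsWithin 0 (Set.Ioi 0))

/-- Finite-state dimension of a sequence (Doty–Moser characterization). -/
noncomputable def dimFSseq {A : Type} (S : ℕ → A) : ℝ≥0∞ :=
  ⨅ T : FST A,
    Filter.liminf (fun n : ℕ => (Kfst T (pre S n) : ℝ≥0∞) / (n : ℝ≥0∞)) Filter.atTop

/-- Finite-state dimension of a set of sequences. -/
noncomputable def dimFSseqSet {A : Type} (X : Set (ℕ → A)) : ℝ≥0∞ :=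
  ⨅ T : FST A, ⨆ S ∈ X,
    Filter.liminf (fun n : ℕ => (Kfst T (pre S n) : ℝ≥0∞) / (n : ℝ≥0∞)) Filter.atTop

/-- digit complement of a sequence -/
def compSeq (b : ℕ) (S : ℕ → Fin b) : ℕ → Fin b :=
  fun i => ⟨b - 1 - (S i : ℕ), by have := (S i).isLt; omega⟩

/-- `S` ends with infinitely many digits `b-1`. -/
def endsBm1 (b : ℕ) (S : ℕ → Fin b) : Prop := ∃ N, ∀ i ≥ N, (S i : ℕ) = b - 1

/-- A separator enumerator: a map into `[0,1)` with dense image in `[0,1]`. -/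
def isSE {A : Type} (f : List A → ℝ) : Prop :=
  (∀ w, f w ∈ Set.Ico (0:ℝ) 1) ∧ ∀ y ∈ Set.Icc (0:ℝ) 1, y ∈ closure (Set.range f)

/-- `f`-`T`-information content of `x` at precision `δ`. -/
noncomputable def KprecF {A : Type} (T : FST A) (f : List A → ℝ) (δ : ℝ) (x : ℝ) : ℕ∞ :=
  sInf {k : ℕ∞ | ∃ w : List A, |f w - x| < δ ∧ Kfst T w = k}

/-- `f`-enumerator finite-state dimension of a point. -/
noncomputable def dimFSf {A : Type} [Fintype A] (f : List A → ℝ) (x : ℝ) : ℝ≥0∞ :=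
  ⨅ T : FST A,
    Filter.liminf (fun δ : ℝ =>
      (KprecF T f δ x : ℝ≥0∞) / ENNReal.ofReal (Real.logb (Fintype.card A) (1/δ)))
      (nhdsWithin 0 (Set.Ioi 0))

/-- `f`-enumerator finite-state dimension of a set. -/
noncomputable def dimFSfSet {A : Type} [Fintype A] (f : List A → ℝ) (E : Set ℝ) : ℝ≥0∞ :=
  ⨅ T : FST A, ⨆ x ∈ E,
    Filter.liminf (fun δ : ℝ =>
      (KprecF T f δ x : ℝ≥0∞) / ENNReal.ofReal (Real.logb (Fintype.card A) (1/δ)))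
      (nhdsWithin 0 (Set.Ioi 0))

open scoped Classical in
/-- Number of occurrences of `w` among the first `N` positions of `S`. -/
noncomputable def occCount {b : ℕ} (S : ℕ → Fin b) (w : List (Fin b)) (N : ℕ) : ℕ :=
  (Finset.range N).filter (fun i => ∀ j : Fin w.length, S (i + j.1) = w.get j) |>.card

/-!
Two facts are combined. If `|realb b w - realSeq b S| < b⁻ⁿ`, then at the first digit where `w` and
`S` part, a carry (or borrow) must propagate up to position `n`; so the first `n` digits of `S` are
a prefix of `w`, at most one free digit, and a run of a single digit. And a finite-state transducer
can afford to edit the output of `T` in this way: a program for `T` is cut into blocks of `m`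
letters, each block is recoded with `m + 2` letters, and the two spare letters leave room for
commands that emit one given letter, or a run of `m²` copies of a given letter. A program of length
`p` becomes one of length `(1 + O(1/m)) p + O(n/m) + O(1)`, and the overhead vanishes as `m → ∞`.
-/

section Liminf

lemma le_of_forall_le_one_add_mul_add {x y : ℝ≥0∞}
    (h : ∀ ε : NNReal, 0 < ε → x ≤ (1 + ε) * y + 2 * ε) : x ≤ y := by
  rcases eq_or_ne y ⊤ with rfl | hy
  · exact le_top
  have hlim : Tendsto (fun ε : NNReal => (1 + (ε : ℝ≥0∞)) * y + 2 * ε) (nhdsWithin 0 (Ioi 0))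
      (nhds ((1 + (0 : NNReal)) * y + 2 * (0 : NNReal))) := by
    have hε : Tendsto (fun ε : NNReal => (ε : ℝ≥0∞)) (nhdsWithin 0 (Ioi 0)) (nhds (0 : NNReal)) :=
      (ENNReal.continuous_coe.tendsto 0).mono_left nhdsWithin_le_nhds
    exact (ENNReal.Tendsto.mul_const (hε.const_add 1) (Or.inr hy)).add
      (ENNReal.Tendsto.const_mul hε (Or.inr ENNReal.ofNat_ne_top))
  simpa using ge_of_tendsto hlim (eventually_mem_nhdsWithin.mono fun ε hε => h ε hε)

lemma liminf_div_natCast_le_of_le_affine {u v : ℕ → ℝ≥0∞} {ε : NNReal} (hε : 0 < ε) {C : ℕ}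
    (h : ∀ n, u n ≤ (1 + ε) * v n + ε * n + C) :
    liminf (fun n : ℕ => u n / (n : ℝ≥0∞)) atTop ≤
      (1 + ε) * liminf (fun n : ℕ => v n / (n : ℝ≥0∞)) atTop + 2 * ε := by
  have hmono : Monotone fun y : ℝ≥0∞ => (1 + ε) * y + 2 * ε := fun y z hyz => by
    dsimp only; gcongr
  have hcont : Continuous fun y : ℝ≥0∞ => (1 + ε) * y + 2 * ε :=
    (ENNReal.continuous_const_mul (by finiteness)).add continuous_const
  rw [hmono.map_liminf_of_continuousAt _ hcont.continuousAt]
  refine liminf_le_liminf ?_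
  obtain ⟨N, hN⟩ := exists_nat_ge (C / ε : NNReal)
  filter_upwards [eventually_ge_atTop (max N 1)] with n hn
  have hn0 : (n : ℝ≥0∞) ≠ 0 := by
    exact_mod_cast (by omega : n ≠ 0)
  have hC : (C : ℝ≥0∞) ≤ ε * n := by
    have : (C : NNReal) ≤ ε * n := by
      rw [mul_comm, ← div_le_iff₀ hε]
      exact hN.trans (by exact_mod_cast (by omega : N ≤ n))
    exact_mod_cast this
  refine ENNReal.div_le_of_le_mul ?_
  calc u n ≤ (1 + ε) * v n + ε * n + C := h n
    _ ≤ (1 + ε) * v n + ε * n + ε * n := by gcongr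
    _ = (1 + ε) * (v n / n * n) + 2 * ε * n := by
        rw [ENNReal.div_mul_cancel hn0 (ENNReal.natCast_ne_top n)]; ring
    _ = ((1 + ε) * (v n / n) + 2 * ε) * n := by ring

lemma le_inv_pow_floor_logb_inv {b δ : ℝ} (hb : 1 < b) (hδ : 0 < δ)
    (hlog : 0 ≤ Real.logb b (1 / δ)) : δ ≤ (b ^ ⌊Real.logb b (1 / δ)⌋₊)⁻¹ := by
  rw [le_inv_comm₀ hδ (by positivity), ← one_div, ← Real.rpow_natCast,
    ← Real.le_logb_iff_rpow_le hb (by positivity)]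
  exact Nat.floor_le hlog

lemma tendsto_logb_one_div_nhdsGT_zero {b : ℝ} (hb : 1 < b) :
    Tendsto (fun δ : ℝ => Real.logb b (1 / δ)) (nhdsWithin 0 (Ioi 0)) atTop := by
  simpa only [one_div] using! (Real.tendsto_logb_atTop hb).comp tendsto_inv_nhdsGT_zero

lemma liminf_inv_pow_div_le_liminf_div_logb {K : ℝ → ℝ≥0∞} (hK : Antitone K) {b : ℝ} (hb : 1 < b) :
    liminf (fun n : ℕ => K (b ^ n)⁻¹ / (n : ℝ≥0∞)) atTop ≤
      liminf (fun δ : ℝ => K δ / ENNReal.ofReal (Real.logb b (1 / δ)))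
        (nhdsWithin 0 (Ioi 0)) := by
  set l : ℝ → ℝ := fun δ => Real.logb b (1 / δ)
  have hl : Tendsto l (nhdsWithin 0 (Ioi 0)) atTop := tendsto_logb_one_div_nhdsGT_zero hb
  set N : ℝ → ℕ := fun δ => ⌊l δ⌋₊
  have hN : Tendsto N (nhdsWithin 0 (Ioi 0)) atTop := tendsto_nat_floor_atTop.comp hl
  have hratio : Tendsto (fun δ => ENNReal.ofReal (N δ / l δ)) (nhdsWithin 0 (Ioi 0)) (nhds 1) := by
    simpa only [ENNReal.ofReal_one] using!
      ENNReal.tendsto_ofReal ((tendsto_nat_floor_div_atTop (R := ℝ)).comp hl)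
  calc liminf (fun n : ℕ => K (b ^ n)⁻¹ / (n : ℝ≥0∞)) atTop
      ≤ liminf (fun δ => K (b ^ N δ)⁻¹ / N δ) (nhdsWithin 0 (Ioi 0)) :=
        liminf_le_liminf_of_le (u := fun n : ℕ => K (b ^ n)⁻¹ / (n : ℝ≥0∞)) hN
    _ = liminf (fun δ => K (b ^ N δ)⁻¹ / N δ) (nhdsWithin 0 (Ioi 0)) *
          liminf (fun δ => ENNReal.ofReal (N δ / l δ)) (nhdsWithin 0 (Ioi 0)) := by
        rw [hratio.liminf_eq, mul_one]
    _ ≤ liminf (fun δ => K (b ^ N δ)⁻¹ / N δ * ENNReal.ofReal (N δ / l δ))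
          (nhdsWithin 0 (Ioi 0)) := ENNReal.le_liminf_mul
    _ ≤ liminf (fun δ => K δ / ENNReal.ofReal (l δ)) (nhdsWithin 0 (Ioi 0)) := by
        refine liminf_le_liminf ?_
        filter_upwards [self_mem_nhdsWithin, hl.eventually_gt_atTop 0,
          hN.eventually_ge_atTop 1] with δ hδ hlδ hNδ
        have hN0 : (N δ : ℝ≥0∞) ≠ 0 := by exact_mod_cast (by omega : N δ ≠ 0)
        rw [ENNReal.ofReal_div_of_pos hlδ, ENNReal.ofReal_natCast, ← mul_div_assoc,
          ENNReal.div_mul_cancel hN0 (ENNReal.natCast_ne_top _)]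
        gcongr
        exact hK (le_inv_pow_floor_logb_inv hb hδ hlδ.le)

end Liminf

lemma Kfst_out_le {A : Type} (T : FST A) (π : List A) : Kfst T (T.out π) ≤ π.length :=
  sInf_le ⟨π, rfl, rfl⟩

/-- A Mealy machine reading letters of `C` and emitting strings over `A`. Unlike in `FST`, the
states may form any type and the two alphabets may differ, which is what a command language for
driving a transducer needs. -/
structure MealyMachine (Q C A : Type*) where
  step : Q → C → Q
  emit : Q → C → List A

namespace MealyMachine

variable {Q C A : Type*}

/-- The output of a Mealy machine started in a given state. -/
def run (M : MealyMachine Q C A) : Q → List C → List A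
  | _, [] => []
  | q, c :: cs => M.emit q c ++ M.run (M.step q c) cs

lemma run_append (M : MealyMachine Q C A) (q : Q) (cs ds : List C) :
    M.run q (cs ++ ds) = M.run q cs ++ M.run (cs.foldl M.step q) ds := by
  induction cs generalizing q with
  | nil => rfl
  | cons c cs ih => simp only [List.cons_append, run, ih, List.foldl_cons, List.append_assoc]

/-- The machine that simulates `M` on input over `A`, reading it in blocks of `B` letters: `dec`
turns each complete block into an input letter of `M`. The state holds the letters of the current
block read so far. -/
def blockDecoder (M : MealyMachine Q C A) {B : ℕ} (hB : 0 < B) (dec : List A → C) :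
    MealyMachine (Q × {l : List A // l.length < B}) A A where
  step s a :=
    if h : (s.2.1 ++ [a]).length < B then (s.1, ⟨s.2.1 ++ [a], h⟩)
    else (M.step s.1 (dec (s.2.1 ++ [a])), ⟨[], hB⟩)
  emit s a := if (s.2.1 ++ [a]).length < B then [] else M.emit s.1 (dec (s.2.1 ++ [a]))

lemma blockDecoder_run_block (M : MealyMachine Q C A) {B : ℕ} (hB : 0 < B) (dec : List A → C)
    (q : Q) (l : {l : List A // l.length < B}) {r : List A} (hlr : l.1.length + r.length = B)
    (rest : List A) :
    (M.blockDecoder hB dec).run (q, l) (r ++ rest) =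
      M.emit q (dec (l.1 ++ r)) ++
        (M.blockDecoder hB dec).run (M.step q (dec (l.1 ++ r)), ⟨[], hB⟩) rest := by
  induction r generalizing l with
  | nil => exact absurd hlr (by simpa using l.2.ne)
  | cons a r ih =>
    rw [List.length_cons] at hlr
    rw [List.cons_append, run]
    by_cases hlt : (l.1 ++ [a]).length < B
    · have ih' := ih ⟨l.1 ++ [a], hlt⟩ (by
        simp only [List.length_append, List.length_singleton]; omega)
      simp only [blockDecoder, if_pos hlt, dif_pos hlt, List.nil_append] at ih' ⊢
      simpa only [List.append_assoc, List.singleton_append] using ih'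
    · have hr : r = [] := List.eq_nil_of_length_eq_zero (by
        simp only [List.length_append, List.length_singleton] at hlt; omega)
      subst hr
      simp only [blockDecoder, if_neg hlt, dif_neg hlt, List.nil_append]

lemma blockDecoder_run_flatMap (M : MealyMachine Q C A) {B : ℕ} (hB : 0 < B) {dec : List A → C}
    {enc : C → List.Vector A B} (hdec : ∀ c, dec (enc c).toList = c) (q : Q) (cs : List C) :
    (M.blockDecoder hB dec).run (q, ⟨[], hB⟩) (cs.flatMap fun c => (enc c).toList) =
      M.run q cs := by
  induction cs generalizing q with
  | nil => rfl
  | cons c cs ih =>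
    rw [List.flatMap_cons, blockDecoder_run_block _ _ _ _ _ (by simp), List.nil_append, hdec, ih,
      run]

lemma exists_fst_out_eq_run {A : Type} [Finite Q] (M : MealyMachine Q A A) (q₀ : Q) :
    ∃ T : FST A, ∀ w, T.out w = M.run q₀ w := by
  obtain ⟨N, ⟨e⟩⟩ := Finite.exists_equiv_fin Q
  let T : FST A :=
    { n := N
      tr := fun s a => e (M.step (e.symm s) a)
      out1 := fun s a => M.emit (e.symm s) a
      q0 := e q₀ }
  have hrun (w : List A) (q : Q) : T.nuS (e q) w = M.run q w := by
    induction w generalizing q with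
    | nil => rfl
    | cons a w ih => simp only [FST.nuS, run, T, e.symm_apply_apply] at ih ⊢; rw [ih]
  exact ⟨T, fun w => hrun w q₀⟩

theorem exists_fst_Kfst_run_le {A : Type} [Finite Q] [Fintype C] [Nonempty C]
    [Fintype A] (M : MealyMachine Q C A) (q₀ : Q) {B : ℕ} (hB : 0 < B)
    (hcard : Fintype.card C ≤ Fintype.card A ^ B) :
    ∃ T : FST A, ∀ cs : List C, Kfst T (M.run q₀ cs) ≤ (B * cs.length : ℕ) := by
  obtain ⟨enc⟩ : Nonempty (C ↪ List.Vector A B) :=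
    Function.Embedding.nonempty_of_card_le (by rwa [card_vector])
  have hinj : Function.Injective fun c => (enc c).toList :=
    List.Vector.toList_injective.comp enc.injective
  have : Finite {l : List A // l.length < B} := (List.finite_length_lt A B).to_subtype
  obtain ⟨T, hT⟩ := exists_fst_out_eq_run
    (M.blockDecoder hB (Function.invFun fun c => (enc c).toList)) (q₀, ⟨[], hB⟩)
  refine ⟨T, fun cs => ?_⟩
  have hlen : (cs.flatMap fun c => (enc c).toList).length = B * cs.length := by
    simp [List.length_flatMap, mul_comm]
  rw [← M.blockDecoder_run_flatMap hB (Function.leftInverse_invFun hinj), ← hT, ← hlen]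
  exact Kfst_out_le T _

end MealyMachine

namespace FST

variable {A : Type}

lemma nuS_append (T : FST A) (q : Fin T.n) (u v : List A) :
    T.nuS q (u ++ v) = T.nuS q u ++ T.nuS (T.deltaS q u) v := by
  induction u generalizing q with
  | nil => rfl
  | cons a u ih => simp only [List.cons_append, nuS, deltaS, ih, List.append_assoc]

lemma exists_length_nuS_le [Finite A] (T : FST A) (m : ℕ) :
    ∃ L, ∀ q u, u.length ≤ m → (T.nuS q u).length ≤ L := by
  obtain ⟨L, hL⟩ := ((Set.finite_univ.prod (List.finite_length_le A m)).image
    fun p : Fin T.n × List A => (T.nuS p.1 p.2).length).bddAbove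
  exact ⟨L, fun q u hu => hL ⟨(q, u), ⟨Set.mem_univ q, hu⟩, rfl⟩⟩

/-- The machine that edits the output of `T`. Its commands, in the order of the summands, are: feed
a block of `m` letters to `T` and emit the result; emit a given letter; emit a given letter `D`
times. -/
def editor (T : FST A) (m D : ℕ) : MealyMachine (Fin T.n) (List.Vector A m ⊕ A ⊕ A) A where
  step q
    | .inl u => T.deltaS q u.toList
    | .inr _ => q
  emit q
    | .inl u => T.nuS q u.toList
    | .inr (.inl a) => [a]
    | .inr (.inr a) => List.replicate D a

lemma editor_run_letters (T : FST A) (m D : ℕ) (q : Fin T.n) (l : List A) :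
    (T.editor m D).run q (l.map fun a => .inr (.inl a)) = l := by
  induction l with
  | nil => rfl
  | cons a l ih => exact congrArg (a :: ·) ih

lemma editor_run_replicate (T : FST A) (m D : ℕ) (q : Fin T.n) (k : ℕ) (a : A) :
    (T.editor m D).run q (List.replicate k (.inr (.inr a))) = List.replicate (k * D) a := by
  induction k with
  | zero => rw [zero_mul]; rfl
  | succ k ih =>
    rw [Nat.succ_mul, Nat.add_comm (k * D)]
    exact (congrArg (List.replicate D a ++ ·) ih).trans List.replicate_append_replicate

lemma exists_editor_run_eq_replicate (T : FST A) (m : ℕ) {D : ℕ} (hD : 0 < D) (k : ℕ) (a : A) :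
    ∃ cs, (∀ q, (T.editor m D).run q cs = List.replicate k a) ∧ cs.length ≤ k / D + D := by
  refine ⟨List.replicate (k / D) (.inr (.inr a)) ++
    (List.replicate (k % D) a).map fun a => .inr (.inl a), fun q => ?_, ?_⟩
  · rw [MealyMachine.run_append, editor_run_replicate, editor_run_letters,
      List.replicate_append_replicate, mul_comm, Nat.div_add_mod]
  · simpa using (Nat.mod_lt k hD).le

lemma exists_editor_run_eq_take (T : FST A) {m : ℕ} (hm : 0 < m) (D : ℕ) {L : ℕ}
    (hL : ∀ q u, u.length ≤ m → (T.nuS q u).length ≤ L) (q : Fin T.n) (π : List A) (s : ℕ) :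
    ∃ cs, (T.editor m D).run q cs = (T.nuS q π).take s ∧ cs.length ≤ π.length / m + L := by
  induction hπ : π.length using Nat.strong_induction_on generalizing π q s with
  | _ p ih =>
    have hsplit : T.nuS q π = T.nuS q (π.take m) ++ T.nuS (T.deltaS q (π.take m)) (π.drop m) := by
      rw [← nuS_append, List.take_append_drop]
    by_cases hblock : m ≤ π.length ∧ (T.nuS q (π.take m)).length ≤ s
    · obtain ⟨hmπ, hs⟩ := hblock
      obtain ⟨cs, hrun, hlen⟩ := ih (p - m) (by omega) (T.deltaS q (π.take m)) (π.drop m)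
        (s - (T.nuS q (π.take m)).length) (by rw [List.length_drop, hπ])
      refine ⟨.inl ⟨π.take m, List.length_take_of_le hmπ⟩ :: cs, ?_, ?_⟩
      · rw [hsplit, List.take_append, List.take_of_length_le hs, ← hrun]
        rfl
      · rw [List.length_cons, Nat.div_eq_sub_div hm (hπ ▸ hmπ)]
        omega
    · refine ⟨((T.nuS q π).take s).map fun a => .inr (.inl a), editor_run_letters .., ?_⟩
      have hshort : ((T.nuS q π).take s).length ≤ L := by
        rcases not_and_or.mp hblock with hmπ | hs
        · exact (List.length_take_le' _ _).trans (hL q π (by omega))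
        · exact (List.length_take_le _ _).trans
            ((not_le.mp hs).le.trans (hL q _ (List.length_take_le _ _)))
      rw [List.length_map]
      exact hshort.trans (Nat.le_add_left _ _)

lemma card_editor_commands_le (A : Type) [Fintype A] [Nontrivial A] {m : ℕ} (hm : 0 < m) :
    Fintype.card (List.Vector A m ⊕ A ⊕ A) ≤ Fintype.card A ^ (m + 2) := by
  have hA : 2 ≤ Fintype.card A := Fintype.one_lt_card
  have hself : Fintype.card A ≤ Fintype.card A ^ m := Nat.le_self_pow hm.ne' _
  have hsq : 2 ^ 2 ≤ Fintype.card A ^ 2 := Nat.pow_le_pow_left hA 2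
  rw [Fintype.card_sum, Fintype.card_sum, card_vector, pow_add]
  nlinarith

theorem exists_Kfst_take_append_le [Finite A] [Nontrivial A] (T : FST A) {m D : ℕ} (hm : 0 < m)
    (hD : 0 < D) :
    ∃ (T' : FST A) (C : ℕ), ∀ (π : List A) (s : ℕ) (l : List A) (k : ℕ) (a : A),
      Kfst T' ((T.out π).take s ++ l ++ List.replicate k a) ≤
        ((m + 2) * (π.length / m + l.length + k / D + C) : ℕ) := by
  have : Fintype A := Fintype.ofFinite A
  obtain ⟨L, hL⟩ := T.exists_length_nuS_le m
  obtain ⟨T', hT'⟩ := (T.editor m D).exists_fst_Kfst_run_le T.q0 (by omega)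
    (card_editor_commands_le A hm)
  refine ⟨T', L + D, fun π s l k a => ?_⟩
  obtain ⟨cs, hcs, hcs_len⟩ := T.exists_editor_run_eq_take hm D hL T.q0 π s
  obtain ⟨ds, hds, hds_len⟩ := T.exists_editor_run_eq_replicate m hD k a
  have hrun : (T.editor m D).run T.q0 (cs ++ l.map (fun a => .inr (.inl a)) ++ ds) =
      (T.out π).take s ++ l ++ List.replicate k a := by
    rw [MealyMachine.run_append, MealyMachine.run_append, hcs, editor_run_letters, hds]
    rfl
  rw [← hrun]
  refine (hT' _).trans (Nat.cast_le.mpr (Nat.mul_le_mul_left _ ?_))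
  rw [List.length_append, List.length_append, List.length_map]
  omega

lemma natCast_mul_div_add_le {ε : NNReal} {m : ℕ} (hm : 0 < m) (hε : 3 ≤ ε * m) {j : ℕ}
    (hj : j ≤ 1) (p k C : ℕ) :
    (((m + 2) * (p / m + j + k / (m * m) + C) : ℕ) : NNReal) ≤
      (1 + ε) * p + ε * k + ((m + 2) * (1 + C) : ℕ) := by
  have hm1 : (1 : NNReal) ≤ m := by exact_mod_cast hm
  have hcoef : (m : NNReal) + 2 ≤ (1 + ε) * m :=
    calc (m : NNReal) + 2 ≤ m + 3 := by gcongr; norm_num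
      _ ≤ m + ε * m := by gcongr
      _ = (1 + ε) * m := by ring
  have hcoef' : (m : NNReal) + 2 ≤ ε * (m * m) :=
    calc (m : NNReal) + 2 ≤ m + 2 * m := by gcongr; exact le_mul_of_one_le_right' hm1
      _ = 3 * m := by ring
      _ ≤ ε * m * m := by gcongr
      _ = ε * (m * m) := by ring
  have hp : ((p / m : ℕ) : NNReal) * m ≤ p := by exact_mod_cast Nat.div_mul_le_self p m
  have hk : ((k / (m * m) : ℕ) : NNReal) * (m * m) ≤ k := by
    exact_mod_cast Nat.div_mul_le_self k (m * m)
  have hj' : (j : NNReal) ≤ 1 := by exact_mod_cast hj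
  push_cast
  calc ((m : NNReal) + 2) * ((p / m : ℕ) + j + (k / (m * m) : ℕ) + C)
      = (m + 2) * (p / m : ℕ) + (m + 2) * (k / (m * m) : ℕ) + (m + 2) * (j + C) := by ring
    _ ≤ (1 + ε) * m * (p / m : ℕ) + ε * (m * m) * (k / (m * m) : ℕ) + (m + 2) * (1 + C) := by
        gcongr
    _ = (1 + ε) * ((p / m : ℕ) * m) + ε * ((k / (m * m) : ℕ) * (m * m)) + (m + 2) * (1 + C) := by
        ring
    _ ≤ (1 + ε) * p + ε * k + (m + 2) * (1 + C) := by gcongr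

theorem exists_Kfst_take_append_le_one_add_mul [Finite A] [Nontrivial A] (T : FST A)
    {ε : NNReal} (hε : 0 < ε) :
    ∃ (T' : FST A) (C : ℕ), ∀ (π : List A) (s : ℕ) (l : List A) (k : ℕ) (a : A), l.length ≤ 1 →
      (Kfst T' ((T.out π).take s ++ l ++ List.replicate k a) : ℝ≥0∞) ≤
        (1 + ε) * π.length + ε * k + C := by
  obtain ⟨m, hm⟩ := exists_nat_gt (3 / ε)
  have hm0 : 0 < m := by exact_mod_cast pos_of_gt hm
  have hεm : 3 ≤ ε * m := by
    rw [mul_comm]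
    exact ((div_lt_iff₀ hε).mp hm).le
  obtain ⟨T', C, hT'⟩ := T.exists_Kfst_take_append_le hm0 (Nat.mul_pos hm0 hm0)
  refine ⟨T', (m + 2) * (1 + C), fun π s l k a hl => ?_⟩
  calc (Kfst T' ((T.out π).take s ++ l ++ List.replicate k a) : ℝ≥0∞)
      ≤ ((m + 2) * (π.length / m + l.length + k / (m * m) + C) : ℕ) := by
        exact_mod_cast ENat.toENNReal_le.mpr (hT' π s l k a)
    _ ≤ (1 + ε) * π.length + ε * k + ((m + 2) * (1 + C) : ℕ) := by
        exact_mod_cast natCast_mul_div_add_le hm0 hεm hl π.length k C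

end FST

section Digits

variable {b : ℕ}

lemma realSeq_eq_ofDigits (S : ℕ → Fin b) : realSeq b S = Real.ofDigits S := rfl

lemma realSeq_eq_head_add_tail (S : ℕ → Fin b) :
    realSeq b S = (S 0 + realSeq b (fun i => S (i + 1))) / b := by
  rw [realSeq_eq_ofDigits, realSeq_eq_ofDigits, Real.ofDigits_eq_sum_add_ofDigits S 1]
  simp only [Finset.sum_range_one, Real.ofDigitsTerm]
  ring

lemma realb_cons (a : Fin b) (w : List (Fin b)) : realb b (a :: w) = (a + realb b w) / b := by
  simp only [realb, List.length_cons, Fin.sum_univ_succ, List.get_cons_zero, List.get_cons_succ',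
    Fin.val_zero, Fin.val_succ, add_div, Finset.sum_div, div_div, ← pow_succ]
  simp

lemma realb_nonneg (w : List (Fin b)) : 0 ≤ realb b w :=
  Finset.sum_nonneg fun _ _ => by positivity

lemma realb_le_one (w : List (Fin b)) : realb b w ≤ 1 := by
  induction w with
  | nil => simp [realb]
  | cons a w ih =>
    have ha : (a : ℝ) + 1 ≤ b := by exact_mod_cast a.isLt
    rw [realb_cons]
    exact div_le_one_of_le₀ (by linarith) (by positivity)

lemma pre_succ {A : Type} (S : ℕ → A) (n : ℕ) :
    pre S (n + 1) = S 0 :: pre (fun i => S (i + 1)) n := by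
  simp [pre, List.ofFn_succ]

lemma pre_eq_replicate {A : Type} {S : ℕ → A} {n : ℕ} {a : A} (h : ∀ i < n, S i = a) :
    pre S n = List.replicate n a := by
  rw [pre, ← List.ofFn_const]
  exact congrArg List.ofFn (funext fun i => h i i.isLt)

lemma val_eq_zero_of_realSeq_lt {S : ℕ → Fin b} {n : ℕ} (h : realSeq b S < ((b : ℝ) ^ n)⁻¹) {i : ℕ}
    (hi : i < n) : (S i : ℕ) = 0 := by
  have hb : (1 : ℝ) ≤ b := by exact_mod_cast (S 0).pos
  have hterm : (S i : ℝ) * ((b : ℝ) ^ (i + 1))⁻¹ < 1 * ((b : ℝ) ^ (i + 1))⁻¹ :=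
    calc (S i : ℝ) * ((b : ℝ) ^ (i + 1))⁻¹ ≤ realSeq b S :=
          Real.summable_ofDigitsTerm.le_tsum i fun _ _ => Real.ofDigitsTerm_nonneg
      _ < ((b : ℝ) ^ n)⁻¹ := h
      _ ≤ 1 * ((b : ℝ) ^ (i + 1))⁻¹ := by
        rw [one_mul]
        gcongr
        exact hi
  have hlt : (S i : ℝ) < 1 := lt_of_mul_lt_mul_right hterm (by positivity)
  exact Nat.lt_one_iff.mp (by exact_mod_cast hlt)

lemma realSeq_add_realSeq_rev (hb : 1 < b) (S : ℕ → Fin b) :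
    realSeq b S + realSeq b (fun i => (S i).rev) = 1 := by
  simp only [realSeq_eq_ofDigits]
  rw [← Real.ofDigits_const_last_eq_one' hb]
  simp only [Real.ofDigits]
  rw [← Real.summable_ofDigitsTerm.tsum_add Real.summable_ofDigitsTerm]
  refine tsum_congr fun i => ?_
  have hdigit : (S i : ℝ) + (S i).rev = (b - 1 : ℕ) := by
    exact_mod_cast (by rw [Fin.val_rev]; omega : (S i : ℕ) + (S i).rev = b - 1)
  simp only [Real.ofDigitsTerm, ← add_mul, hdigit]

lemma exists_pre_eq_replicate_of_realSeq_lt {S : ℕ → Fin b} {n : ℕ}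
    (h : realSeq b S < ((b : ℝ) ^ n)⁻¹) : ∃ d, pre S n = List.replicate n d :=
  ⟨⟨0, (S 0).pos⟩, pre_eq_replicate fun _ hi => Fin.ext (val_eq_zero_of_realSeq_lt h hi)⟩

lemma exists_pre_eq_replicate_of_lt_realSeq (hb : 1 < b) {S : ℕ → Fin b} {n : ℕ}
    (h : 1 - ((b : ℝ) ^ n)⁻¹ < realSeq b S) : ∃ d, pre S n = List.replicate n d := by
  have hrev : realSeq b (fun i => (S i).rev) < ((b : ℝ) ^ n)⁻¹ := by
    linarith [realSeq_add_realSeq_rev hb S]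
  refine ⟨Fin.rev ⟨0, by omega⟩, pre_eq_replicate fun i hi => ?_⟩
  rw [← Fin.rev_eq_iff]
  exact Fin.ext (val_eq_zero_of_realSeq_lt hrev hi)

lemma abs_head_add_sub_lt {a c : Fin b} {x y : ℝ} {n : ℕ}
    (h : |(a + x) / b - (c + y) / b| < ((b : ℝ) ^ (n + 1))⁻¹) :
    |(a + x) - (c + y)| < ((b : ℝ) ^ n)⁻¹ := by
  have hb : (0 : ℝ) < b := by exact_mod_cast a.pos
  rwa [← sub_div, abs_div, abs_of_pos hb, div_lt_iff₀ hb, pow_succ, mul_inv,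
    inv_mul_cancel_right₀ hb.ne'] at h

theorem exists_pre_eq_take_append_replicate (hb : 1 < b) {n : ℕ} {w : List (Fin b)}
    {S : ℕ → Fin b} (h : |realb b w - realSeq b S| < ((b : ℝ) ^ n)⁻¹) :
    ∃ (s : ℕ) (l : List (Fin b)) (k : ℕ) (d : Fin b),
      l.length ≤ 1 ∧ pre S n = w.take s ++ l ++ List.replicate k d := by
  induction n generalizing w S with
  | zero => exact ⟨0, [], 0, S 0, by simp [pre]⟩
  | succ n ih =>
    cases w with
    | nil =>
      have hS : realSeq b S < ((b : ℝ) ^ (n + 1))⁻¹ := by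
        simpa [realb] using (abs_lt.mp h).1
      obtain ⟨d, hd⟩ := exists_pre_eq_replicate_of_realSeq_lt hS
      exact ⟨0, [], n + 1, d, by simp [hd]⟩
    | cons a w =>
      rw [realb_cons, realSeq_eq_head_add_tail] at h
      have htail := abs_head_add_sub_lt h
      rw [pre_succ]
      rcases lt_trichotomy a (S 0) with hlt | rfl | hgt
      · have hdigit : (a : ℝ) + 1 ≤ S 0 := by exact_mod_cast Fin.lt_def.mp hlt
        obtain ⟨d, hd⟩ := exists_pre_eq_replicate_of_realSeq_lt
          (S := fun i => S (i + 1)) (n := n) (by linarith [(abs_lt.mp htail).1, realb_le_one w])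
        exact ⟨0, [S 0], n, d, by simp [hd]⟩
      · rw [add_sub_add_left_eq_sub] at htail
        obtain ⟨s, l, k, d, hl, hpre⟩ := ih htail
        exact ⟨s + 1, l, k, d, hl, by simp [hpre]⟩
      · have hdigit : (S 0 : ℝ) + 1 ≤ a := by exact_mod_cast Fin.lt_def.mp hgt
        obtain ⟨d, hd⟩ := exists_pre_eq_replicate_of_lt_realSeq hb
          (S := fun i => S (i + 1)) (n := n) (by linarith [(abs_lt.mp htail).2, realb_nonneg w])
        exact ⟨0, [S 0], n, d, by simp [hd]⟩

end Digits

section Precision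

lemma Kprec_antitone (b : ℕ) (T : FST (Fin b)) (x : ℝ) : Antitone fun δ => Kprec b T δ x :=
  fun _ _ hδ => sInf_le_sInf fun _ ⟨w, hw, hk⟩ => ⟨w, hw.trans_le hδ, hk⟩

lemma mem_of_sInf_ne_top {s : Set ℕ∞} (hs : sInf s ≠ ⊤) : sInf s ∈ s :=
  csInf_mem <| Set.nonempty_iff_ne_empty.mpr fun h => hs (h ▸ sInf_empty)

lemma exists_length_eq_Kprec {b : ℕ} {T : FST (Fin b)} {δ x : ℝ} (h : Kprec b T δ x ≠ ⊤) :
    ∃ π : List (Fin b), |realb b (T.out π) - x| < δ ∧ π.length = Kprec b T δ x := by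
  obtain ⟨w, hw, hK⟩ := mem_of_sInf_ne_top h
  obtain ⟨π, rfl, hπ⟩ := mem_of_sInf_ne_top (s := {k | ∃ π, T.out π = w ∧ (π.length : ℕ∞) = k})
    (hK.trans_ne h)
  exact ⟨π, hw, hπ.trans hK⟩

theorem exists_Kfst_pre_le_Kprec {b : ℕ} (hb : 1 < b) (T : FST (Fin b)) (S : ℕ → Fin b)
    {ε : NNReal} (hε : 0 < ε) :
    ∃ (T' : FST (Fin b)) (C : ℕ), ∀ n : ℕ, (Kfst T' (pre S n) : ℝ≥0∞) ≤
      (1 + ε) * Kprec b T ((b : ℝ) ^ n)⁻¹ (realSeq b S) + ε * n + C := by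
  have : Nontrivial (Fin b) := Fin.nontrivial_iff_two_le.mpr hb
  obtain ⟨T', C, hT'⟩ := T.exists_Kfst_take_append_le_one_add_mul hε
  refine ⟨T', C, fun n => ?_⟩
  rcases eq_or_ne (Kprec b T ((b : ℝ) ^ n)⁻¹ (realSeq b S)) ⊤ with htop | hfin
  · simp [htop]
  obtain ⟨π, hπ, hK⟩ := exists_length_eq_Kprec hfin
  obtain ⟨s, l, k, d, hl, hpre⟩ := exists_pre_eq_take_append_replicate hb hπ
  have hkn : k ≤ n := by
    have hlen := congrArg List.length hpre
    rw [pre, List.length_ofFn, List.length_append, List.length_replicate] at hlen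
    omega
  rw [← hK, hpre, ENat.toENNReal_coe]
  refine (hT' π s l k d hl).trans ?_
  gcongr

end Precision

theorem dimFSseq_le_dimFSb_general (b : ℕ) (hb : 2 ≤ b) (x : ℝ) (S : ℕ → Fin b)
    (hS : realSeq b S = x) : dimFSseq S ≤ dimFSb b x := by
  subst hS
  refine le_iInf fun T => le_of_forall_le_one_add_mul_add fun ε hε => ?_
  obtain ⟨T', C, hT'⟩ := exists_Kfst_pre_le_Kprec hb T S hε
  have hK : Antitone fun δ => (Kprec b T δ (realSeq b S) : ℝ≥0∞) :=
    ENat.toENNReal_mono.comp_antitone (Kprec_antitone b T _)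
  calc dimFSseq S ≤ liminf (fun n : ℕ => (Kfst T' (pre S n) : ℝ≥0∞) / n) atTop := iInf_le _ T'
    _ ≤ (1 + ε) * liminf (fun n : ℕ =>
          (Kprec b T ((b : ℝ) ^ n)⁻¹ (realSeq b S) : ℝ≥0∞) / n) atTop + 2 * ε :=
        liminf_div_natCast_le_of_le_affine hε hT'
    _ ≤ (1 + ε) * liminf (fun δ : ℝ => (Kprec b T δ (realSeq b S) : ℝ≥0∞) /
          ENNReal.ofReal (Real.logb b (1 / δ))) (nhdsWithin 0 (Ioi 0)) + 2 * ε := by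
        gcongr
        exact liminf_inv_pow_div_le_liminf_div_logb hK (by exact_mod_cast hb)

/-- dim_FS(seq_b(x)) ≤ dim_FS^b(x). -/
theorem dimFSseq_le_dimFSb (b : ℕ) (hb : 2 ≤ b) (x : ℝ) (hx : x ∈ Set.Ico (0:ℝ) 1)
    (S : ℕ → Fin b) (hS : realSeq b S = x) (hS' : ¬ endsBm1 b S) :
    dimFSseq S ≤ dimFSb b x :=
  dimFSseq_le_dimFSb_general b hb x S hS
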